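/- arXiv:2212.09560 — 2 statements merged into one kernel-verified Lean document; each statement's English description precedes it below -/
import Mathlib

section
/- For every integer m ≥ 1, the m-th Taylor coefficient of the modified equation at the left boundary node satisfies D₁₀ + 2^m · (D₂₀ + (6/Δx²) ν̂₂ 𝔤) = (2/Δx)^m · Ж₀^{(m)}, where Ж₀^{(m)} = (2^{2−m} ĉ₁ − ĉ₂) Δx^{m−1} − 4 (2^{2−m} ν̂₁ + ν̂₂ (1 − (3/2)𝔤)) Δx^{m−2}; equivalently, D₁₀ + 2^m · (D₂₀ + (6/Δx²) ν̂₂ 𝔤) = 3·2^{m+1} ν̂₂ 𝔤 / Δx² + 4(ĉ₁ − 2^{m−2} ĉ₂)/Δx − 16(ν̂₁ + 2^{m−2} ν̂₂)/Δx². -/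
/-!
Differentiating the quadratic basis gives `l₀' = ξ - 1/2`, `l₁' = -2ξ`, `l₂' = ξ + 1/2`, and the
sum `∑ r, l₀'(ξ_r) l_r'(ξ_i)` is the interpolant of `l₀'` differentiated, i.e. `l₀'' = 1`. Hence
`D₁₀ = 4 ĉ₁/Δx - 16 ν̂₁/Δx²` (`Dmat_one_zero`) and `D₂₀ = -ĉ₂/Δx - 4 ν̂₂/Δx²` (`Dmat_two_zero`).
Both closed forms then follow by splitting the integer powers of `2` and `Δx`, which are nonzero.
-/

noncomputable section

/-- The three Gauss–Lobatto points on `[-1,1]` for `N = 2`. -/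
def glPoint : Fin 3 → ℝ := ![-1, 0, 1]

/-- The three Gauss–Lobatto quadrature weights. -/
def glWeight : Fin 3 → ℝ := ![1/3, 4/3, 1/3]

/-- The quadratic Lagrange basis polynomials at the Gauss–Lobatto points `-1, 0, 1`. -/
def lagBasis : Fin 3 → ℝ → ℝ :=
  ![fun ξ => ξ * (ξ - 1) / 2, fun ξ => -((ξ + 1) * (ξ - 1)), fun ξ => ξ * (ξ + 1) / 2]

/-- The `N = 2` VP-DG derivative matrix
`D_{ij} := (χ_j/η₁)δ_{ij} − (2/Δx) ĉ_i (w_i/w_j) l_j'(ξ_i)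
          − (2/Δx)² ν̂_i (w_i/w_j) Σ_{r=0}^{2} l_j'(ξ_r) l_r'(ξ_i)`,
where `χ`, `chat` (penalized advection `ĉ`) and `nuhat` (penalized viscosity `ν̂`)
are the nodal values. -/
def Dmat (Δx η₁ : ℝ) (χ chat nuhat : Fin 3 → ℝ) (i j : Fin 3) : ℝ :=
  χ j / η₁ * (if i = j then 1 else 0)
    - 2 / Δx * chat i * (glWeight i / glWeight j) * deriv (lagBasis j) (glPoint i)
    - (2 / Δx) ^ 2 * nuhat i * (glWeight i / glWeight j) *
        ∑ r : Fin 3, deriv (lagBasis j) (glPoint r) * deriv (lagBasis r) (glPoint i)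

/-- The coefficient `Ж₀^{(m)} = (2^{2−m} ĉ₁ − ĉ₂) Δx^{m−1}
− 4 (2^{2−m} ν̂₁ + ν̂₂ (1 − (3/2)𝔤)) Δx^{m−2}` of the modified equation at the left
boundary node. -/
def Zh0 (Δx c₁ c₂ ν₁ ν₂ g : ℝ) (m : ℤ) : ℝ :=
  ((2 : ℝ) ^ (2 - m) * c₁ - c₂) * Δx ^ (m - 1)
    - 4 * ((2 : ℝ) ^ (2 - m) * ν₁ + ν₂ * (1 - 3 / 2 * g)) * Δx ^ (m - 2)

theorem deriv_lagBasis (j : Fin 3) (x : ℝ) :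
    deriv (lagBasis j) x = (![x - 1 / 2, -2 * x, x + 1 / 2] : Fin 3 → ℝ) j := by
  have hx := hasDerivAt_id' x
  fin_cases j
  · refine (((hx.mul (hx.sub_const 1)).div_const 2).congr_deriv ?_).deriv
    simp; ring
  · refine (((hx.add_const 1).mul (hx.sub_const 1)).neg.congr_deriv ?_).deriv
    simp; ring
  · refine (((hx.mul (hx.add_const 1)).div_const 2).congr_deriv ?_).deriv
    simp; ring

theorem Dmat_one_zero (Δx η₁ : ℝ) (χ chat nuhat : Fin 3 → ℝ) :
    Dmat Δx η₁ χ chat nuhat 1 0 = 4 * chat 1 / Δx - 16 * nuhat 1 / Δx ^ 2 := by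
  simp [Dmat, deriv_lagBasis, glWeight, glPoint, Fin.sum_univ_three]
  ring

theorem Dmat_two_zero (Δx η₁ : ℝ) (χ chat nuhat : Fin 3 → ℝ) :
    Dmat Δx η₁ χ chat nuhat 2 0 = -chat 2 / Δx - 4 * nuhat 2 / Δx ^ 2 := by
  simp [Dmat, deriv_lagBasis, glWeight, glPoint, Fin.sum_univ_three]
  ring

/-- For every integer `m ≥ 1`, the `m`-th Taylor coefficient of the modified equation at the
left boundary node satisfies
`D₁₀ + 2^m · (D₂₀ + (6/Δx²) ν̂₂ 𝔤) = (2/Δx)^m · Ж₀^{(m)}`, and equivalently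
`= 3·2^{m+1} ν̂₂ 𝔤/Δx² + 4(ĉ₁ − 2^{m−2} ĉ₂)/Δx − 16(ν̂₁ + 2^{m−2} ν̂₂)/Δx²`. -/
theorem taylor_coefficient_left_node (Δx η₁ χ₀ χ₁ χ₂ c₀ c₁ c₂ ν₀ ν₁ ν₂ g : ℝ)
    (hΔx : 0 < Δx) (hη₁ : η₁ ≠ 0) (m : ℕ) (hm : 1 ≤ m) :
    Dmat Δx η₁ ![χ₀, χ₁, χ₂] ![c₀, c₁, c₂] ![ν₀, ν₁, ν₂] 1 0
        + 2 ^ m * (Dmat Δx η₁ ![χ₀, χ₁, χ₂] ![c₀, c₁, c₂] ![ν₀, ν₁, ν₂] 2 0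
            + 6 / Δx ^ 2 * ν₂ * g)
      = (2 / Δx) ^ m * Zh0 Δx c₁ c₂ ν₁ ν₂ g (m : ℤ) ∧
    Dmat Δx η₁ ![χ₀, χ₁, χ₂] ![c₀, c₁, c₂] ![ν₀, ν₁, ν₂] 1 0
        + 2 ^ m * (Dmat Δx η₁ ![χ₀, χ₁, χ₂] ![c₀, c₁, c₂] ![ν₀, ν₁, ν₂] 2 0
            + 6 / Δx ^ 2 * ν₂ * g)
      = 3 * 2 ^ (m + 1) * ν₂ * g / Δx ^ 2
          + 4 * (c₁ - (2 : ℝ) ^ ((m : ℤ) - 2) * c₂) / Δx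
          - 16 * (ν₁ + (2 : ℝ) ^ ((m : ℤ) - 2) * ν₂) / Δx ^ 2 := by
  have hΔ : Δx ≠ 0 := hΔx.ne'
  have h2 : (2 : ℝ) ≠ 0 := two_ne_zero
  rw [Dmat_one_zero, Dmat_two_zero]
  simp only [Matrix.cons_val]
  constructor
  · rw [Zh0, zpow_sub₀ h2, zpow_sub₀ hΔ, zpow_sub₀ hΔ, zpow_natCast, zpow_natCast, div_pow]
    norm_cast
    field_simp
    ring
  · rw [zpow_sub₀ h2, zpow_natCast, zpow_ofNat, pow_succ]
    field_simp
    ring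

end
end

section
/- For every real polynomial p of degree at most 2, the semi-discrete VP-DG operator applied to the nodal values of p at the left boundary node obeys the exact modified-equation identity: D₀₀·p(−1) + D₁₀·p(0) + D₂₀·p(1) + (6/Δx²) ν̂₂ 𝔤 · (p(1) − p(−1)) = (χ₀/η₁ + r̃₀)·p(−1) + (2/Δx)·Ж₀^{(1)}·p'(−1) + (1/2)·(2/Δx)²·Ж₀^{(2)}·p''(−1), where r̃₀ := (3ĉ₀ + 4ĉ₁ − ĉ₂)/Δx − 4(ν̂₀ + 4ν̂₁ + ν̂₂)/Δx² and Ж₀^{(m)} := (2^{2−m} ĉ₁ − ĉ₂) Δx^{m−1} − 4 (2^{2−m} ν̂₁ + ν̂₂ (1 − (3/2)𝔤)) Δx^{m−2}. -/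
/-!
The identity is Taylor's formula at `-1`: a polynomial of degree at most two satisfies
`p(0) = p(-1) + p'(-1) + p''(-1)/2` and `p(1) = p(-1) + 2 p'(-1) + 2 p''(-1)`, and inserting this
on the left-hand side produces exactly the coefficients of `p(-1)`, `p'(-1)` and `p''(-1)` on the
right. In the proof `p` is written as `a X² + b X + c`, so that the comparison becomes a rational
identity, once column `0` of `Dmat` is known explicitly. That column follows from the derivatives
of the Lagrange basis (`deriv_lagBasis_zero`, `deriv_lagBasis_one`, `deriv_lagBasis_two`).
-/

noncomputable section

/-- The reaction parameter `r̃₀ := (3ĉ₀ + 4ĉ₁ − ĉ₂)/Δx − 4(ν̂₀ + 4ν̂₁ + ν̂₂)/Δx²`. -/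
def rTilde0 (Δx c₀ c₁ c₂ ν₀ ν₁ ν₂ : ℝ) : ℝ :=
  (3 * c₀ + 4 * c₁ - c₂) / Δx - 4 * (ν₀ + 4 * ν₁ + ν₂) / Δx ^ 2

theorem deriv_lagBasis_zero (x : ℝ) : deriv (lagBasis 0) x = x - 1 / 2 := by
  have h : HasDerivAt (fun ξ : ℝ => ξ * (ξ - 1) / 2) ((1 * (x - 1) + x * 1) / 2) x :=
    ((hasDerivAt_id' x).mul ((hasDerivAt_id' x).sub_const 1)).div_const 2
  have hd : deriv (lagBasis 0) x = (1 * (x - 1) + x * 1) / 2 := h.deriv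
  rw [hd]; ring

theorem deriv_lagBasis_one (x : ℝ) : deriv (lagBasis 1) x = -2 * x := by
  have h : HasDerivAt (fun ξ : ℝ => -((ξ + 1) * (ξ - 1))) (-(1 * (x - 1) + (x + 1) * 1)) x :=
    (((hasDerivAt_id' x).add_const 1).mul ((hasDerivAt_id' x).sub_const 1)).neg
  have hd : deriv (lagBasis 1) x = -(1 * (x - 1) + (x + 1) * 1) := h.deriv
  rw [hd]; ring

theorem deriv_lagBasis_two (x : ℝ) : deriv (lagBasis 2) x = x + 1 / 2 := by
  have h : HasDerivAt (fun ξ : ℝ => ξ * (ξ + 1) / 2) ((1 * (x + 1) + x * 1) / 2) x :=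
    ((hasDerivAt_id' x).mul ((hasDerivAt_id' x).add_const 1)).div_const 2
  have hd : deriv (lagBasis 2) x = (1 * (x + 1) + x * 1) / 2 := h.deriv
  rw [hd]; ring

/-- For every real polynomial `p` of degree at most `2`, the semi-discrete VP-DG operator
applied to the nodal values of `p` at the left boundary node obeys the exact
modified-equation identity
`D₀₀·p(−1) + D₁₀·p(0) + D₂₀·p(1) + (6/Δx²) ν̂₂ 𝔤 · (p(1) − p(−1))
  = (χ₀/η₁ + r̃₀)·p(−1) + (2/Δx)·Ж₀^{(1)}·p'(−1) + (1/2)·(2/Δx)²·Ж₀^{(2)}·p''(−1)`. -/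
theorem modified_equation_exact_on_quadratics
    (Δx η₁ χ₀ χ₁ χ₂ c₀ c₁ c₂ ν₀ ν₁ ν₂ g : ℝ)
    (hΔx : 0 < Δx) (hη₁ : η₁ ≠ 0) (p : Polynomial ℝ) (hp : p.degree ≤ 2) :
    Dmat Δx η₁ ![χ₀, χ₁, χ₂] ![c₀, c₁, c₂] ![ν₀, ν₁, ν₂] 0 0 * p.eval (-1)
      + Dmat Δx η₁ ![χ₀, χ₁, χ₂] ![c₀, c₁, c₂] ![ν₀, ν₁, ν₂] 1 0 * p.eval 0
      + Dmat Δx η₁ ![χ₀, χ₁, χ₂] ![c₀, c₁, c₂] ![ν₀, ν₁, ν₂] 2 0 * p.eval 1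
      + 6 / Δx ^ 2 * ν₂ * g * (p.eval 1 - p.eval (-1))
    = (χ₀ / η₁ + rTilde0 Δx c₀ c₁ c₂ ν₀ ν₁ ν₂) * p.eval (-1)
      + 2 / Δx * Zh0 Δx c₁ c₂ ν₁ ν₂ g 1 * p.derivative.eval (-1)
      + 1 / 2 * (2 / Δx) ^ 2 * Zh0 Δx c₁ c₂ ν₁ ν₂ g 2
          * p.derivative.derivative.eval (-1) := by
  have hΔ : Δx ≠ 0 := hΔx.ne'
  obtain ⟨a, b, c, rfl⟩ : ∃ a b c : ℝ, p = Polynomial.C a * Polynomial.X ^ 2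
      + Polynomial.C b * Polynomial.X + Polynomial.C c :=
    ⟨_, _, _, Polynomial.eq_quadratic_of_degree_le_two hp⟩
  have D00 : Dmat Δx η₁ ![χ₀, χ₁, χ₂] ![c₀, c₁, c₂] ![ν₀, ν₁, ν₂] 0 0
      = χ₀ / η₁ + 3 * c₀ / Δx - 4 * ν₀ / Δx ^ 2 := by
    simp [Dmat, Fin.sum_univ_three, deriv_lagBasis_zero, deriv_lagBasis_one,
      deriv_lagBasis_two, glPoint, glWeight]
    field_simp
    ring
  have D10 : Dmat Δx η₁ ![χ₀, χ₁, χ₂] ![c₀, c₁, c₂] ![ν₀, ν₁, ν₂] 1 0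
      = 4 * c₁ / Δx - 16 * ν₁ / Δx ^ 2 := by
    simp [Dmat, Fin.sum_univ_three, deriv_lagBasis_zero, deriv_lagBasis_one,
      deriv_lagBasis_two, glPoint, glWeight]
    field_simp
    ring
  have D20 : Dmat Δx η₁ ![χ₀, χ₁, χ₂] ![c₀, c₁, c₂] ![ν₀, ν₁, ν₂] 2 0
      = -c₂ / Δx - 4 * ν₂ / Δx ^ 2 := by
    simp [Dmat, Fin.sum_univ_three, deriv_lagBasis_zero, deriv_lagBasis_one,
      deriv_lagBasis_two, glPoint, glWeight]
    field_simp
    ring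
  have Z1 : Zh0 Δx c₁ c₂ ν₁ ν₂ g 1
      = (2 * c₁ - c₂) - 4 * (2 * ν₁ + ν₂ * (1 - 3 / 2 * g)) / Δx := by
    norm_num [Zh0, zpow_neg_one, div_eq_mul_inv]
  have Z2 : Zh0 Δx c₁ c₂ ν₁ ν₂ g 2
      = (c₁ - c₂) * Δx - 4 * (ν₁ + ν₂ * (1 - 3 / 2 * g)) := by
    norm_num [Zh0]
  rw [D00, D10, D20, Z1, Z2, rTilde0]
  simp
  field_simp
  ring

end
end
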